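/- Let Γ ∈ ℝ^{d×d} be invertible, d ≥ 2. (i) For the compliance setting, the infimum over strictly positive λ ∈ Δ(d) of max_{j,j'∈{1,…,d}} (e_j − e_{j'})^⊤ (Γ^⊤ diag(λ) Γ)^{-1} (e_j − e_{j'}) is at most d · max_{j,j'} ‖Γ^{-⊤}(e_j − e_{j'})‖₂²; in particular the uniform design λ_i = 1/d achieves max_{j,j'} value exactly d · max_{j,j'} ‖Γ^{-⊤}(e_j − e_{j'})‖₂². (ii) If θ ∈ ℝ^d has a unique largest coordinate j* and Δ_min := min_{j ≠ j*} (θ_{j*} − θ_j), then ρ* := inf over strictly positive λ ∈ Δ(d) of max_{j ≠ j*} (e_{j*} − e_j)^⊤(Γ^⊤ diag(λ) Γ)^{-1}(e_{j*} − e_j) / ⟨e_{j*} − e_j, θ⟩² satisfies ρ* ≤ 2d / (σ_min(Γ)² · Δ_min²). -/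

import Mathlib

open Matrix

open Classical in
/-- The smallest eigenvalue of a Hermitian (symmetric) real matrix; `lamMin (Γᵀ * Γ)` is the
square `σ_min(Γ)²` of the smallest singular value of `Γ`.  (Junk value `0` if the matrix is not
Hermitian.) -/
noncomputable def lamMin {d : ℕ} (M : Matrix (Fin d) (Fin d) ℝ) : ℝ :=
  if h : M.IsHermitian then ⨅ i, h.eigenvalues i else 0

lemma quad_eq {d : ℕ} (Γ : Matrix (Fin d) (Fin d) ℝ) (hΓ : IsUnit Γ.det) (lam v : Fin d → ℝ)
    (hl : ∀ i, 0 < lam i) :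
    v ⬝ᵥ ((Γᵀ * diagonal lam * Γ)⁻¹ *ᵥ v) = ∑ i, (lam i)⁻¹ * ((Γ⁻¹)ᵀ *ᵥ v) i ^ 2 := by
  have hD : (diagonal lam)⁻¹ = diagonal (fun i => (lam i)⁻¹) := by
    apply Matrix.inv_eq_right_inv
    rw [diagonal_mul_diagonal, ← diagonal_one]
    congr 1
    funext i
    exact mul_inv_cancel₀ (hl i).ne'
  rw [Matrix.mul_inv_rev, Matrix.mul_inv_rev, hD, ← mulVec_mulVec, ← mulVec_mulVec,
    dotProduct_mulVec, ← mulVec_transpose, ← transpose_nonsing_inv]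
  simp only [dotProduct, mulVec_diagonal]
  exact Finset.sum_congr rfl fun i _ => by ring

lemma rayleigh {d : ℕ} (M : Matrix (Fin d) (Fin d) ℝ) (h : M.IsHermitian) (u : Fin d → ℝ) :
    lamMin M * (u ⬝ᵥ u) ≤ u ⬝ᵥ (M *ᵥ u) := by
  classical
  have hm : lamMin M = ⨅ i, h.eigenvalues i := by
    unfold lamMin
    rw [dif_pos h]
  have hle : ∀ i, lamMin M ≤ h.eigenvalues i := fun i => by
    rw [hm]; exact ciInf_le (Set.finite_range _).bddBelow i
  have hU : (h.eigenvectorUnitary : Matrix (Fin d) (Fin d) ℝ) *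
      star (h.eigenvectorUnitary : Matrix (Fin d) (Fin d) ℝ) = 1 := by simp
  have hst : star (h.eigenvectorUnitary : Matrix (Fin d) (Fin d) ℝ) =
      (h.eigenvectorUnitary : Matrix (Fin d) (Fin d) ℝ)ᵀ := by
    rw [star_eq_conjTranspose, conjTranspose_eq_transpose_of_trivial]
  have hs : M = (h.eigenvectorUnitary : Matrix (Fin d) (Fin d) ℝ) * diagonal h.eigenvalues *
      star (h.eigenvectorUnitary : Matrix (Fin d) (Fin d) ℝ) := by
    have := h.spectral_theorem
    simpa [Unitary.conjStarAlgAut_apply, Function.comp_def] using this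
  generalize (h.eigenvectorUnitary : Matrix (Fin d) (Fin d) ℝ) = U at *
  rw [hst] at hs hU
  have h1 : u ⬝ᵥ (M *ᵥ u) = ∑ i, h.eigenvalues i * (Uᵀ *ᵥ u) i ^ 2 := by
    conv_lhs => rw [hs]
    rw [← mulVec_mulVec, ← mulVec_mulVec, dotProduct_mulVec, ← mulVec_transpose]
    simp only [dotProduct, mulVec_diagonal]
    exact Finset.sum_congr rfl fun i _ => by ring
  have h2 : u ⬝ᵥ u = ∑ i, (Uᵀ *ᵥ u) i ^ 2 := by
    have : u ⬝ᵥ u = u ⬝ᵥ ((U * Uᵀ) *ᵥ u) := by rw [hU, one_mulVec]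
    rw [this, ← mulVec_mulVec, dotProduct_mulVec, ← mulVec_transpose]
    simp only [dotProduct]
    exact Finset.sum_congr rfl fun i _ => by ring
  rw [h1, h2, Finset.mul_sum]
  exact Finset.sum_le_sum fun i _ => mul_le_mul_of_nonneg_right (hle i) (sq_nonneg _)

lemma herm_gram {d : ℕ} (Γ : Matrix (Fin d) (Fin d) ℝ) : (Γᵀ * Γ).IsHermitian := by
  have := isHermitian_conjTranspose_mul_self Γ
  rwa [conjTranspose_eq_transpose_of_trivial] at this

lemma lamMin_pos {d : ℕ} (hd : 2 ≤ d) (Γ : Matrix (Fin d) (Fin d) ℝ) (hΓ : IsUnit Γ.det) :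
    0 < lamMin (Γᵀ * Γ) := by
  have hp : (Γᵀ * Γ).PosDef := by
    have := Matrix.PosDef.conjTranspose_mul_self Γ
      (Matrix.mulVec_injective_of_isUnit ((Matrix.isUnit_iff_isUnit_det Γ).2 hΓ))
    rwa [conjTranspose_eq_transpose_of_trivial] at this
  haveI : Nonempty (Fin d) := ⟨⟨0, by omega⟩⟩
  unfold lamMin
  rw [dif_pos (herm_gram Γ)]
  obtain ⟨i, hi⟩ := exists_eq_ciInf_of_finite (f := (herm_gram Γ).eigenvalues)
  rw [← hi]
  exact hp.eigenvalues_pos i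

lemma inv_bound {d : ℕ} (hd : 2 ≤ d) (Γ : Matrix (Fin d) (Fin d) ℝ) (hΓ : IsUnit Γ.det)
    (v : Fin d → ℝ) :
    ∑ i, ((Γ⁻¹)ᵀ *ᵥ v) i ^ 2 ≤ (v ⬝ᵥ v) / lamMin (Γᵀ * Γ) := by
  have hm := lamMin_pos hd Γ hΓ
  set m := lamMin (Γᵀ * Γ)
  set w := (Γ⁻¹)ᵀ *ᵥ v with hw
  set u := Γ⁻¹ *ᵥ w with hu
  have hΓu : Γ *ᵥ u = w := by
    rw [hu, mulVec_mulVec, Matrix.mul_nonsing_inv _ hΓ, one_mulVec]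
  have hv : v = Γᵀ *ᵥ w := by
    rw [hw, mulVec_mulVec, ← transpose_mul, Matrix.nonsing_inv_mul _ hΓ, transpose_one, one_mulVec]
  have hr := rayleigh (Γᵀ * Γ) (herm_gram Γ) u
  rw [← mulVec_mulVec, hΓu, ← hv] at hr
  have huv : u ⬝ᵥ v = ∑ i, w i ^ 2 := by
    rw [hv, dotProduct_mulVec, ← mulVec_transpose, transpose_transpose, hΓu]
    simp only [dotProduct]
    exact Finset.sum_congr rfl fun i _ => by ring
  rw [← huv]
  have hcs : (u ⬝ᵥ v) ^ 2 ≤ (u ⬝ᵥ u) * (v ⬝ᵥ v) := by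
    have := Finset.sum_mul_sq_le_sq_mul_sq Finset.univ u v
    simpa [dotProduct, pow_two] using this
  have hvv : 0 ≤ v ⬝ᵥ v := Finset.sum_nonneg fun i _ => mul_self_nonneg _
  have h0 : 0 ≤ u ⬝ᵥ v := by rw [huv]; exact Finset.sum_nonneg fun i _ => sq_nonneg _
  rw [le_div_iff₀ hm]
  rcases h0.eq_or_lt with h | h
  · rw [← h]; simpa using hvv
  · have : m * (u ⬝ᵥ v) ^ 2 ≤ (u ⬝ᵥ v) * (v ⬝ᵥ v) := by
      calc m * (u ⬝ᵥ v) ^ 2 ≤ m * ((u ⬝ᵥ u) * (v ⬝ᵥ v)) := mul_le_mul_of_nonneg_left hcs hm.le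
        _ = (m * (u ⬝ᵥ u)) * (v ⬝ᵥ v) := by ring
        _ ≤ _ := mul_le_mul_of_nonneg_right hr hvv
    nlinarith

/-- Compliance-setting design bounds.  (i) The infimum over strictly positive
designs `λ ∈ Δ(d)` of `max_{j,j'} ‖e_j − e_{j'}‖²_{(Γ^⊤ diag(λ) Γ)^{-1}}` is at most
`d · max_{j,j'} ‖Γ^{-⊤}(e_j − e_{j'})‖₂²`, and the uniform design `λ_i = 1/d` achieves exactly
this value.  (ii) If `θ` has unique largest coordinate `j*` with minimum gap `Δ_min`, then
`ρ* ≤ 2d / (σ_min(Γ)² Δ_min²)`. -/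
theorem compliance_design_bounds {d : ℕ} (hd : 2 ≤ d)
    (Γ : Matrix (Fin d) (Fin d) ℝ) (hΓ : IsUnit Γ.det)
    (θ : Fin d → ℝ) (jstar : Fin d) (hmax : ∀ j, j ≠ jstar → θ j < θ jstar)
    (Δmin : ℝ) (hΔ : Δmin = sInf {v : ℝ | ∃ j, j ≠ jstar ∧ v = θ jstar - θ j})
    (ρstar : ℝ)
    (hρ : ρstar = sInf {r : ℝ | ∃ lam : Fin d → ℝ,
      (∀ i, 0 < lam i) ∧ (∑ i, lam i) = 1 ∧
      r = sSup {v : ℝ | ∃ j, j ≠ jstar ∧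
        v = ((Pi.single jstar 1 - Pi.single j 1) ⬝ᵥ
              ((Γᵀ * diagonal lam * Γ)⁻¹ *ᵥ (Pi.single jstar 1 - Pi.single j 1)))
            / ((Pi.single jstar (1 : ℝ) - Pi.single j 1) ⬝ᵥ θ) ^ 2}}) :
    -- (i) the infimum over strictly positive designs is at most `d · max_{j,j'} ‖Γ^{-⊤}(e_j − e_{j'})‖₂²`
    (sInf {r : ℝ | ∃ lam : Fin d → ℝ,
        (∀ i, 0 < lam i) ∧ (∑ i, lam i) = 1 ∧
        r = sSup {v : ℝ | ∃ j j' : Fin d,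
          v = (Pi.single j 1 - Pi.single j' 1) ⬝ᵥ
            ((Γᵀ * diagonal lam * Γ)⁻¹ *ᵥ (Pi.single j 1 - Pi.single j' 1))}}
      ≤ d * sSup {v : ℝ | ∃ j j' : Fin d,
          v = ∑ i, ((Γ⁻¹)ᵀ *ᵥ (Pi.single j 1 - Pi.single j' 1)) i ^ 2})
    -- the uniform design achieves exactly this value
    ∧ (sSup {v : ℝ | ∃ j j' : Fin d,
          v = (Pi.single j 1 - Pi.single j' 1) ⬝ᵥ
            ((Γᵀ * diagonal (fun _ : Fin d => (1 : ℝ) / d) * Γ)⁻¹ *ᵥ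
              (Pi.single j 1 - Pi.single j' 1))}
        = d * sSup {v : ℝ | ∃ j j' : Fin d,
          v = ∑ i, ((Γ⁻¹)ᵀ *ᵥ (Pi.single j 1 - Pi.single j' 1)) i ^ 2})
    -- (ii) `ρ* ≤ 2d / (σ_min(Γ)² Δ_min²)`
    ∧ ρstar ≤ 2 * d / (lamMin (Γᵀ * Γ) * Δmin ^ 2) := by
  have hd0 : (0 : ℝ) < d := by exact_mod_cast (by omega : 0 < d)
  have hunif : ∀ v : Fin d → ℝ,
      v ⬝ᵥ ((Γᵀ * diagonal (fun _ : Fin d => (1 : ℝ) / d) * Γ)⁻¹ *ᵥ v)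
        = d * ∑ i, ((Γ⁻¹)ᵀ *ᵥ v) i ^ 2 := fun v => by
    rw [quad_eq Γ hΓ _ v (fun _ => by positivity), Finset.mul_sum]
    exact Finset.sum_congr rfl fun i _ => by simp
  have hsum : ∑ _i : Fin d, (1 : ℝ) / d = 1 := by
    simp [hd0.ne']
  have hB : sSup {v : ℝ | ∃ j j' : Fin d,
          v = (Pi.single j 1 - Pi.single j' 1) ⬝ᵥ
            ((Γᵀ * diagonal (fun _ : Fin d => (1 : ℝ) / d) * Γ)⁻¹ *ᵥ
              (Pi.single j 1 - Pi.single j' 1))}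
        = d * sSup {v : ℝ | ∃ j j' : Fin d,
          v = ∑ i, ((Γ⁻¹)ᵀ *ᵥ (Pi.single j 1 - Pi.single j' 1)) i ^ 2} := by
    rw [← smul_eq_mul (a := (d : ℝ)), ← Real.sSup_smul_of_nonneg hd0.le]
    congr 1
    ext v
    simp only [hunif, Set.mem_setOf_eq, Set.mem_smul_set, smul_eq_mul]
    constructor
    · rintro ⟨j, j', h⟩
      exact ⟨_, ⟨j, j', rfl⟩, h.symm⟩
    · rintro ⟨_, ⟨j, j', rfl⟩, h⟩
      exact ⟨j, j', h.symm⟩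
  refine ⟨?_, hB, ?_⟩
  · rw [← hB]
    apply csInf_le
    · refine ⟨0, ?_⟩
      rintro r ⟨lam, hl, -, rfl⟩
      apply Real.sSup_nonneg
      rintro v ⟨j, j', rfl⟩
      rw [quad_eq Γ hΓ _ _ hl]
      exact Finset.sum_nonneg fun i _ => mul_nonneg (inv_nonneg.2 (hl i).le) (sq_nonneg _)
    · exact ⟨_, fun _ => by positivity, hsum, rfl⟩
  · have hgap : ∀ j, (Pi.single jstar (1 : ℝ) - Pi.single j 1) ⬝ᵥ θ = θ jstar - θ j := fun j => by
      rw [sub_dotProduct, single_dotProduct, single_dotProduct, one_mul, one_mul]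
    obtain ⟨j₀, hj₀⟩ : ∃ j : Fin d, j ≠ jstar := by
      haveI : Nontrivial (Fin d) := Fin.nontrivial_iff_two_le.2 hd
      exact exists_ne jstar
    have hfin : {v : ℝ | ∃ j, j ≠ jstar ∧ v = θ jstar - θ j}.Finite :=
      (Set.finite_range (fun j => θ jstar - θ j)).subset
        (by rintro v ⟨j, -, rfl⟩; exact ⟨j, rfl⟩)
    have hΔle : ∀ j, j ≠ jstar → Δmin ≤ θ jstar - θ j := fun j hj => by
      rw [hΔ]; exact csInf_le hfin.bddBelow ⟨j, hj, rfl⟩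
    have hΔpos : 0 < Δmin := by
      obtain ⟨j, hj, h⟩ := Set.Nonempty.csInf_mem (s := {v : ℝ | ∃ j, j ≠ jstar ∧ v = θ jstar - θ j})
        ⟨_, j₀, hj₀, rfl⟩ hfin
      rw [hΔ, h]
      exact sub_pos.2 (hmax j hj)
    have hm := lamMin_pos hd Γ hΓ
    have key : ∀ r ∈ {r : ℝ | ∃ lam : Fin d → ℝ,
      (∀ i, 0 < lam i) ∧ (∑ i, lam i) = 1 ∧
      r = sSup {v : ℝ | ∃ j, j ≠ jstar ∧
        v = ((Pi.single jstar 1 - Pi.single j 1) ⬝ᵥ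
              ((Γᵀ * diagonal lam * Γ)⁻¹ *ᵥ (Pi.single jstar 1 - Pi.single j 1)))
            / ((Pi.single jstar (1 : ℝ) - Pi.single j 1) ⬝ᵥ θ) ^ 2}}, 0 ≤ r := by
      rintro r ⟨lam, hl, -, rfl⟩
      apply Real.sSup_nonneg
      rintro v ⟨j, -, rfl⟩
      rw [quad_eq Γ hΓ _ _ hl]
      exact div_nonneg (Finset.sum_nonneg fun i _ =>
        mul_nonneg (inv_nonneg.2 (hl i).le) (sq_nonneg _)) (sq_nonneg _)
    rw [hρ]
    refine (csInf_le ⟨0, key⟩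
      ⟨fun _ => (1 : ℝ) / d, fun _ => by positivity, hsum, rfl⟩).trans ?_
    refine csSup_le ?_ ?_
    · exact ⟨_, j₀, hj₀, rfl⟩
    rintro v ⟨j, hj, rfl⟩
    rw [hunif, hgap]
    have hb := inv_bound hd Γ hΓ (Pi.single jstar 1 - Pi.single j 1)
    have hvv : (Pi.single jstar (1 : ℝ) - Pi.single j 1) ⬝ᵥ
        (Pi.single jstar (1 : ℝ) - Pi.single j 1) = (2 : ℝ) := by
      rw [sub_dotProduct, single_dotProduct, single_dotProduct]
      simp [hj, hj.symm]
      norm_num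
    rw [hvv] at hb
    have h2 : Δmin ^ 2 ≤ (θ jstar - θ j) ^ 2 := pow_le_pow_left₀ hΔpos.le (hΔle j hj) 2
    calc _ ≤ (d * (2 / lamMin (Γᵀ * Γ))) / Δmin ^ 2 := by gcongr
      _ = _ := by field_simp
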